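/- For every n ∈ ℕ and every z ∈ ℂ, |(−1)^{⌊n/2⌋}·(2π)^n/(2·n!)·B_n(z + 1/2) − T_n(2πz)| < 2^{−n}·e^{4π|z|}, where T_n is the degree-n truncation of the cosine series when n is even and of the sine series when n is odd. -/

import Mathlib

open Filter Real Finset

/-- The `n`-th Bernoulli polynomial evaluated at a complex argument. -/
noncomputable def BernoulliC (n : ℕ) (z : ℂ) : ℂ :=
  Polynomial.aeval z (Polynomial.bernoulli n)

/-- The degree-`n` truncation of the cosine series (for `n` even) or of the sine series
(for `n` odd): `T_{2k}(z) = ∑_{j=0}^{k} (-1)^j z^{2j}/(2j)!` and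
`T_{2k+1}(z) = ∑_{j=0}^{k} (-1)^j z^{2j+1}/(2j+1)!`. -/
noncomputable def truncTrig (n : ℕ) (z : ℂ) : ℂ :=
  if n % 2 = 0 then
    ∑ j ∈ Finset.range (n / 2 + 1), (-1 : ℂ) ^ j * z ^ (2 * j) / ((2 * j).factorial : ℂ)
  else
    ∑ j ∈ Finset.range (n / 2 + 1), (-1 : ℂ) ^ j * z ^ (2 * j + 1) / ((2 * j + 1).factorial : ℂ)

/-!
Put `c m = (-1)^⌊m/2⌋ (2π)^m / (2 m!) · B_m(1/2)`. The addition formula for Bernoulli polynomials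
writes the rescaled `B_n(z + 1/2)` as `∑_{k+m=n} (-1)^⌊k/2⌋ (2πz)^k / k! · c m`, and `T_n(2πz)` is
the same sum with `c m` replaced by `1` for even `m` and by `0` for odd `m`. By symmetry about
`1/2`, `c m = 0` for odd `m`, while for even `m > 0` the Fourier series of `B_m` gives the
alternating series `c m = 1 - 2^{-m} + 3^{-m} - ⋯`; finally `c 0 = 1/2`. So each `c m` is replaced
at a cost below `2^{-m}`, and `∑_{k+m=n} (2π|z|)^k / k! · 2^{-m}` is `2^{-n}` times a partial sum
of the series of `e^{4π|z|}`.
-/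

section AdditionFormula

variable (A : Type*) [CommRing A] [Algebra ℚ A]

lemma isRegular_exp_sub_one : IsRegular (PowerSeries.exp A - 1) := by
  have factor : PowerSeries.exp A - 1 =
      PowerSeries.X * PowerSeries.mk fun p ↦ PowerSeries.coeff (p + 1) (PowerSeries.exp A) := by
    simpa using PowerSeries.sub_const_eq_X_mul_shift (PowerSeries.exp A)
  rw [factor]
  refine IsRegular.mul ?_ (PowerSeries.isUnit_iff_constantCoeff.mpr ?_).isRegular
  · exact ⟨PowerSeries.X_mul_injective, PowerSeries.mul_X_injective⟩
  · simp [← PowerSeries.coeff_zero_eq_constantCoeff_apply]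

variable {A}

lemma inv_factorial_smul_aeval_bernoulli_add (n : ℕ) (x y : A) :
    (1 / n.factorial : ℚ) • Polynomial.aeval (x + y) (Polynomial.bernoulli n) =
      ∑ p ∈ antidiagonal n, (1 / p.1.factorial : ℚ) • y ^ p.1 *
        (1 / p.2.factorial : ℚ) • Polynomial.aeval x (Polynomial.bernoulli p.2) := by
  let F (t : A) : PowerSeries A :=
    PowerSeries.mk fun n ↦ Polynomial.aeval t ((1 / n.factorial : ℚ) • Polynomial.bernoulli n)
  have translate : F (x + y) = PowerSeries.rescale y (PowerSeries.exp A) * F x := by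
    refine (isRegular_exp_sub_one A).right ?_
    calc F (x + y) * (PowerSeries.exp A - 1)
        = PowerSeries.X * PowerSeries.rescale (x + y) (PowerSeries.exp A) :=
          Polynomial.bernoulli_generating_function _
      _ = PowerSeries.rescale y (PowerSeries.exp A) *
            (PowerSeries.X * PowerSeries.rescale x (PowerSeries.exp A)) := by
          rw [← PowerSeries.exp_mul_exp_eq_exp_add]; ring
      _ = PowerSeries.rescale y (PowerSeries.exp A) * F x * (PowerSeries.exp A - 1) := by
          rw [← Polynomial.bernoulli_generating_function, mul_assoc]
  simpa only [F, PowerSeries.coeff_mul, PowerSeries.coeff_mk, PowerSeries.coeff_rescale,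
    PowerSeries.coeff_exp, map_smul, mul_comm (_ ^ _) (algebraMap ℚ A _), ← Algebra.smul_def]
    using congrArg (PowerSeries.coeff n) translate

end AdditionFormula

lemma abs_sub_lt_of_tendsto_alternating_series {E : Type*} [Ring E] [LinearOrder E]
    [IsOrderedRing E] [TopologicalSpace E] [OrderClosedTopology E] {f : ℕ → E} {l : E}
    (hf : StrictAnti f) (hl : Tendsto (fun n ↦ ∑ i ∈ range n, (-1) ^ i * f i) atTop (nhds l)) :
    |l - f 0| < f 1 := by
  have lower : f 0 - f 1 + (f 2 - f 3) ≤ l := by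
    convert hf.antitone.alternating_series_le_tendsto hl 2 using 1
    simp [sum_range_succ, pow_succ, sub_eq_add_neg, add_assoc]
  have upper : l ≤ f 0 - f 1 + f 2 := by
    convert hf.antitone.tendsto_le_alternating_series hl 1 using 1
    simp [sum_range_succ, pow_succ, sub_eq_add_neg, add_assoc]
  have h₁₂ : f 2 < f 1 := hf (by norm_num)
  have h₂₃ : f 3 < f 2 := hf (by norm_num)
  have h₃ : 0 ≤ f 3 := by simpa using lower.trans upper
  rw [abs_lt]
  constructor <;> grind

lemma hasSum_alternating_one_div_nat_pow {k : ℕ} (hk : k ≠ 0) :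
    HasSum (fun i : ℕ ↦ (-1 : ℝ) ^ i * (1 / ((i : ℝ) + 1) ^ (2 * k)))
      ((-1) ^ k * (2 * π) ^ (2 * k) / (2 * (2 * k).factorial) * bernoulliFun (2 * k) 2⁻¹) := by
  have fourier := hasSum_one_div_nat_pow_mul_cos hk (x := 2⁻¹) (by norm_num)
  rw [← hasSum_nat_add_iff' 1] at fourier
  convert! fourier.neg using 1
  · funext i
    have cos_eq : Real.cos (2 * π * ((i + 1 : ℕ) : ℝ) * 2⁻¹) = (-1) ^ (i + 1) := by
      rw [← Real.cos_nat_mul_pi]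
      congr 1
      ring
    rw [cos_eq]
    push_cast
    ring
  · have zero_term :
        ∑ i ∈ range 1, 1 / (i : ℝ) ^ (2 * k) * Real.cos (2 * π * i * 2⁻¹) = 0 := by
      simp [hk]
    rw [zero_term, bernoulliFun]
    ring

lemma sum_antidiagonal_pow_div_factorial_mul_pow_le {x r : ℝ} (hx : 0 ≤ x) (hr : 0 < r) (n : ℕ) :
    ∑ p ∈ antidiagonal n, x ^ p.1 / p.1.factorial * r ^ p.2 ≤ r ^ n * Real.exp (x / r) := by
  calc ∑ p ∈ antidiagonal n, x ^ p.1 / p.1.factorial * r ^ p.2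
      = r ^ n * ∑ k ∈ range (n + 1), (x / r) ^ k / k.factorial := by
        rw [← Nat.sum_antidiagonal_eq_sum_range_succ fun k _ ↦ (x / r) ^ k / k.factorial, mul_sum]
        refine sum_congr rfl fun ⟨k, m⟩ hkm ↦ ?_
        rw [← mem_antidiagonal.mp hkm, pow_add, div_pow]
        field_simp
    _ ≤ r ^ n * Real.exp (x / r) := by
        gcongr
        exact Real.sum_le_exp_of_nonneg (by positivity) _

/-- The Bernoulli polynomial centred at `1/2`, normalised so as to approximate
`truncTrig n (2πz)`. -/
noncomputable def scaledBernoulli (n : ℕ) (z : ℂ) : ℂ :=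
  (-1) ^ (n / 2) * (2 * π) ^ n / (2 * n.factorial) * BernoulliC n (z + 1 / 2)

lemma scaledBernoulli_zero_right (n : ℕ) :
    scaledBernoulli n 0 =
      ((-1) ^ (n / 2) * (2 * π) ^ n / (2 * n.factorial) * bernoulliFun n 2⁻¹ : ℝ) := by
  have eval_half : BernoulliC n (0 + 1 / 2) = bernoulliFun n 2⁻¹ := by
    rw [BernoulliC, bernoulliFun, Polynomial.eval_map_algebraMap, ← Complex.coe_algebraMap,
      ← Polynomial.aeval_algebraMap_apply]
    norm_num
  rw [scaledBernoulli, eval_half]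
  push_cast
  ring

lemma scaledBernoulli_zero_right_of_odd {n : ℕ} (hn : Odd n) : scaledBernoulli n 0 = 0 := by
  obtain ⟨k, rfl⟩ := hn
  rw [scaledBernoulli_zero_right, bernoulliFun_eval_half_eq_zero, mul_zero, Complex.ofReal_zero]

lemma norm_scaledBernoulli_two_mul_zero_right_sub_one_lt (k : ℕ) :
    ‖scaledBernoulli (2 * k) 0 - 1‖ < (1 / 2) ^ (2 * k) := by
  obtain rfl | hk := eq_or_ne k 0
  · norm_num [scaledBernoulli_zero_right]
  have strictAnti : StrictAnti fun i : ℕ ↦ 1 / ((i : ℝ) + 1) ^ (2 * k) := by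
    intro i j hij
    dsimp only
    gcongr
  have eta_bound := abs_sub_lt_of_tendsto_alternating_series strictAnti
    (hasSum_alternating_one_div_nat_pow hk).tendsto_sum_nat
  rw [scaledBernoulli_zero_right, ← Complex.ofReal_one, ← Complex.ofReal_sub, Complex.norm_real,
    Real.norm_eq_abs, Nat.mul_div_cancel_left k two_pos]
  simpa [one_add_one_eq_two] using eta_bound

lemma norm_scaledBernoulli_zero_right_sub_ite_lt (n : ℕ) :
    ‖scaledBernoulli n 0 - if Even n then 1 else 0‖ < (1 / 2) ^ n := by
  obtain hn | hn := n.even_or_odd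
  · obtain ⟨k, rfl⟩ := hn.two_dvd
    simpa only [if_pos hn] using norm_scaledBernoulli_two_mul_zero_right_sub_one_lt k
  · simp [scaledBernoulli_zero_right_of_odd hn, Nat.not_even_iff_odd.mpr hn]

lemma scaledBernoulli_eq_sum (n : ℕ) (z : ℂ) :
    scaledBernoulli n z =
      ∑ p ∈ antidiagonal n, (-1) ^ (p.1 / 2) * (2 * π * z) ^ p.1 / p.1.factorial *
        scaledBernoulli p.2 0 := by
  have addition := inv_factorial_smul_aeval_bernoulli_add n (1 / 2) z
  simp only [Algebra.smul_def, map_div₀, map_one, map_natCast] at addition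
  calc scaledBernoulli n z
      = (-1) ^ (n / 2) * (2 * π) ^ n / 2 *
          (1 / n.factorial * Polynomial.aeval (1 / 2 + z) (Polynomial.bernoulli n)) := by
        rw [scaledBernoulli, BernoulliC, add_comm z]
        field_simp
    _ = ∑ p ∈ antidiagonal n, (-1) ^ (p.1 / 2) * (2 * π * z) ^ p.1 / p.1.factorial *
          scaledBernoulli p.2 0 := by
        rw [addition, mul_sum]
        refine sum_congr rfl fun ⟨k, m⟩ hkm ↦ ?_
        obtain rfl : k + m = n := mem_antidiagonal.mp hkm
        -- The signs `(-1) ^ ⌊· / 2⌋` multiply correctly unless `k` and `m` are both odd, and for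
        -- odd `m` the term vanishes.
        obtain hm | hm := m.even_or_odd
        · have half_add : (k + m) / 2 = k / 2 + m / 2 := Nat.add_div_of_dvd_left hm.two_dvd
          rw [half_add, scaledBernoulli, BernoulliC, zero_add, pow_add, pow_add, mul_pow _ z]
          field_simp
        · have value_zero : Polynomial.aeval (1 / 2 : ℂ) (Polynomial.bernoulli m) = 0 := by
            simpa [scaledBernoulli, BernoulliC, Nat.factorial_ne_zero] using
              scaledBernoulli_zero_right_of_odd hm
          simp only [value_zero, scaledBernoulli_zero_right_of_odd hm, mul_zero]

lemma truncTrig_add_two (n : ℕ) (w : ℂ) :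
    truncTrig (n + 2) w =
      truncTrig n w + (-1) ^ ((n + 2) / 2) * w ^ (n + 2) / (n + 2).factorial := by
  have half_add_two : (n + 2) / 2 = n / 2 + 1 := by omega
  unfold truncTrig
  simp only [Nat.add_mod_right, half_add_two]
  split_ifs with hn <;> rw [sum_range_succ _ (n / 2 + 1)]
  · rw [show 2 * (n / 2 + 1) = n + 2 by omega]
  · rw [show 2 * (n / 2 + 1) + 1 = n + 2 by omega]

lemma truncTrig_eq_sum (n : ℕ) (w : ℂ) :
    truncTrig n w =
      ∑ p ∈ antidiagonal n, (-1) ^ (p.1 / 2) * w ^ p.1 / p.1.factorial *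
        if Even p.2 then 1 else 0 := by
  induction n using Nat.twoStepInduction with
  | zero => simp [truncTrig]
  | one => simp [truncTrig, Nat.sum_antidiagonal_succ]
  | more n ih _ =>
    rw [truncTrig_add_two, ih, Nat.sum_antidiagonal_succ', Nat.sum_antidiagonal_succ', add_comm]
    simp [Nat.even_add_one, add_assoc]

lemma norm_scaledBernoulli_sub_truncTrig_le (n : ℕ) (z : ℂ) :
    ‖scaledBernoulli n z - truncTrig n (2 * π * z)‖ ≤
      ∑ p ∈ antidiagonal n, (2 * π * ‖z‖) ^ p.1 / p.1.factorial *
        ‖scaledBernoulli p.2 0 - if Even p.2 then 1 else 0‖ := by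
  rw [scaledBernoulli_eq_sum, truncTrig_eq_sum, ← sum_sub_distrib]
  refine norm_sum_le_of_le _ fun p _ ↦ le_of_eq ?_
  rw [← mul_sub, norm_mul]
  simp [abs_of_pos pi_pos]

/-- Dilcher's estimate: for all `n` and `z`,
`|(-1)^{⌊n/2⌋} (2π)^n / (2 n!) · B_n(z + 1/2) - T_n(2πz)| < 2^{-n} e^{4π|z|}`. -/
theorem bernoulli_trig_estimate (n : ℕ) (z : ℂ) :
    ‖((-1 : ℂ) ^ (n / 2) * (2 * (π : ℂ)) ^ n / (2 * (n.factorial : ℂ)) *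
        BernoulliC n (z + 1 / 2) - truncTrig n (2 * (π : ℂ) * z))‖ <
      (2 : ℝ) ^ (-(n : ℤ)) * Real.exp (4 * π * ‖z‖) := by
  calc ‖scaledBernoulli n z - truncTrig n (2 * π * z)‖
      ≤ ∑ p ∈ antidiagonal n, (2 * π * ‖z‖) ^ p.1 / p.1.factorial *
          ‖scaledBernoulli p.2 0 - if Even p.2 then 1 else 0‖ :=
        norm_scaledBernoulli_sub_truncTrig_le n z
    _ < ∑ p ∈ antidiagonal n, (2 * π * ‖z‖) ^ p.1 / p.1.factorial * (1 / 2) ^ p.2 := by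
        refine sum_lt_sum (fun p _ ↦ ?_) ⟨(0, n), by simp, ?_⟩
        · gcongr
          exact (norm_scaledBernoulli_zero_right_sub_ite_lt p.2).le
        · simpa using norm_scaledBernoulli_zero_right_sub_ite_lt n
    _ ≤ (1 / 2) ^ n * Real.exp (2 * π * ‖z‖ / (1 / 2)) :=
        sum_antidiagonal_pow_div_factorial_mul_pow_le (by positivity) (by norm_num) n
    _ = 2 ^ (-(n : ℤ)) * Real.exp (4 * π * ‖z‖) := by
        rw [zpow_neg, zpow_natCast, one_div, inv_pow]
        ring_nf
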